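/- arXiv:1909.03618 — 4 statements merged into one kernel-verified Lean document; each statement's English description precedes it below -/
import Mathlib

section
/- Let φ_{μ,σ}(x) = (1/(σ√(2π))) · exp(−(x − μ)²/(2σ²)) denote the normal density with mean μ and standard deviation σ. Let 0 ≤ ν ≤ μ < 1, and set σ = √(1 − μ²), τ = √(1 − ν²). Then for every real number a, ∫_{−|a|}^{|a|} (1 − x²) φ_{ν,τ}(x) dx ≥ ∫_{−|a|}^{|a|} (1 − x²) φ_{μ,σ}(x) dx. In words: among normal distributions with total error μ² + σ² = 1, against any realization a of the opponent, lower bias (with correspondingly higher variance) yields ex post expected payoff at least as large in the bias-variance game. -/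
/-- The density of the normal distribution with mean `μ` and standard deviation `σ`. -/
noncomputable def normalPDF (μ σ x : ℝ) : ℝ :=
  (1 / (σ * Real.sqrt (2 * Real.pi))) * Real.exp (-(x - μ)^2 / (2 * σ^2))

/-!
If `φ` is the normal density with mean `m` and variance `s`, then `(m² + s - x²) φ` has the
antiderivative `s (x + m) φ`. For `m² + s = 1` the payoff against a realization of absolute value
`A` is therefore a constant multiple of
`√s exp(-(A² + m²)/(2s)) (A cosh t + m sinh t)`, where `t = A m / s`, and its derivative in `m` has
the sign of `m² (A² - 1) sinh t - s (A² + 1 - 2m²) (t cosh t - sinh t)`. For `A, m > 0` and in terms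
of the Langevin function `L t = coth t - 1/t`, this is nonpositive if and only if
`m (A² - 1) ≤ A (A² + 1 - 2m²) L t`, which follows from the bounds `t / (3 + t) ≤ L t ≤ 1`:
the lower one settles `A² + 1 - 2m² ≥ 0`, the upper one `A² + 1 - 2m² < 0`.
-/

open Real Set

section Hyperbolic

lemma le_of_hasDerivAt_nonneg_of_pos {f f' : ℝ → ℝ} {u : ℝ} (hu : 0 ≤ u)
    (hf : ∀ x, HasDerivAt f (f' x) x) (hf' : ∀ x, 0 < x → 0 ≤ f' x) : f 0 ≤ f u := by
  have hmono : MonotoneOn f (Ici 0) := by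
    refine monotoneOn_of_hasDerivWithinAt_nonneg (convex_Ici 0)
      (fun x _ ↦ (hf x).continuousAt.continuousWithinAt)
      (fun x _ ↦ (hf x).hasDerivWithinAt) fun x hx ↦ hf' x ?_
    rwa [interior_Ici] at hx
  exact hmono self_mem_Ici hu hu

lemma two_sub_mul_exp_le {u : ℝ} (hu : 0 ≤ u) : (2 - u) * exp u ≤ 2 + u := by
  have hderiv (x : ℝ) : HasDerivAt (fun u ↦ 2 + u - (2 - u) * exp u) (1 - (1 - x) * exp x) x := by
    refine (((hasDerivAt_id' x).const_add 2).sub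
      (((hasDerivAt_id' x).const_sub 2).mul (hasDerivAt_exp x))).congr_deriv ?_
    ring
  have hderiv_nonneg (x : ℝ) : 0 ≤ 1 - (1 - x) * exp x := by
    have h := mul_le_mul_of_nonneg_right (one_sub_le_exp_neg x) (exp_pos x).le
    rw [← exp_add, neg_add_cancel, exp_zero] at h
    linarith
  have h := le_of_hasDerivAt_nonneg_of_pos hu hderiv fun x _ ↦ hderiv_nonneg x
  simpa using h

lemma six_sub_two_mul_mul_exp_le {u : ℝ} (hu : 0 ≤ u) :
    (6 - 2 * u) * exp u ≤ 6 + 4 * u + u ^ 2 := by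
  have hderiv (x : ℝ) : HasDerivAt (fun u ↦ 6 + 4 * u + u ^ 2 - (6 - 2 * u) * exp u)
      (2 * (2 + x - (2 - x) * exp x)) x := by
    refine (((((hasDerivAt_id' x).const_mul 4).const_add 6).add (hasDerivAt_pow 2 x)).sub
      ((((hasDerivAt_id' x).const_mul 2).const_sub 6).mul (hasDerivAt_exp x))).congr_deriv ?_
    push_cast
    ring
  have h := le_of_hasDerivAt_nonneg_of_pos hu hderiv fun x hx ↦ by
    linarith [two_sub_mul_exp_le hx.le]
  simpa using h

-- The lower bound `t / (3 + t) ≤ L t` on the Langevin function, without denominators.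
lemma sq_mul_sinh_le {t : ℝ} (ht : 0 ≤ t) :
    t ^ 2 * sinh t ≤ (3 + t) * (t * cosh t - sinh t) := by
  have hexp := six_sub_two_mul_mul_exp_le (mul_nonneg zero_le_two ht)
  have hdiff : (3 + t) * (t * cosh t - sinh t) - t ^ 2 * sinh t =
      exp (-t) * (6 + 4 * (2 * t) + (2 * t) ^ 2 - (6 - 2 * (2 * t)) * exp (2 * t)) / 4 := by
    have hsq : exp (-t) * exp (2 * t) = exp t := by rw [← exp_add]; ring_nf
    rw [cosh_eq, sinh_eq]
    linear_combination (6 - 4 * t) / 4 * hsq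
  have := mul_nonneg (exp_pos (-t)).le (sub_nonneg.2 hexp)
  linarith

lemma sinh_le_mul_cosh {t : ℝ} (ht : 0 ≤ t) : sinh t ≤ t * cosh t := by
  have hprod : 0 ≤ (3 + t) * (t * cosh t - sinh t) :=
    (mul_nonneg (sq_nonneg t) (sinh_nonneg_iff.2 ht)).trans (sq_mul_sinh_le ht)
  exact sub_nonneg.1 (nonneg_of_mul_nonneg_right hprod (by positivity))

-- The upper bound `L t ≤ 1` on the Langevin function.
lemma mul_cosh_sub_sinh_le {t : ℝ} (ht : 0 ≤ t) : t * cosh t - sinh t ≤ t * sinh t := by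
  calc t * cosh t - sinh t = t * exp (-t) + t * sinh t - sinh t := by
        rw [← cosh_sub_sinh]; ring
    _ ≤ t * 1 + t * sinh t - t := by
        gcongr
        · exact exp_le_one_iff.2 (neg_nonpos.2 ht)
        · exact self_le_sinh_iff.2 ht
    _ = t * sinh t := by ring

variable {A m s t : ℝ}

lemma sq_sub_one_mul_le (hA : 1 ≤ A ^ 2) (hs : 0 ≤ s) (hms : m ^ 2 + s = 1) :
    (A ^ 2 - 1) * (3 * s + A * m) ≤ A ^ 2 * (A ^ 2 + 1 - 2 * m ^ 2) := by
  have hs1 : s ≤ 1 := by linarith [sq_nonneg m]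
  have hAm : A * m ≤ (A ^ 2 + m ^ 2) / 2 := by linarith [two_mul_le_add_sq A m]
  calc (A ^ 2 - 1) * (3 * s + A * m)
      ≤ (A ^ 2 - 1) * (3 * s + (A ^ 2 + m ^ 2) / 2) := by gcongr
    _ = A ^ 2 * (A ^ 2 + 1 - 2 * m ^ 2) -
        ((A ^ 2 - 1 - s / 2) ^ 2 / 2 + s * (2 - s / 8)) := by
      obtain rfl : s = 1 - m ^ 2 := by linarith
      ring
    _ ≤ A ^ 2 * (A ^ 2 + 1 - 2 * m ^ 2) :=
      sub_le_self _ (add_nonneg (by positivity) (mul_nonneg hs (by linarith)))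

lemma sq_mul_sq_sub_one_mul_sinh_le_of_le_one (hm : 0 ≤ m) (hA : 0 ≤ A) (hA1 : A ≤ 1)
    (hs : 0 ≤ s) (hms : m ^ 2 + s = 1) (ht : 0 ≤ t) (hts : s * t = A * m) :
    m ^ 2 * (A ^ 2 - 1) * sinh t ≤ s * (A ^ 2 + 1 - 2 * m ^ 2) * (t * cosh t - sinh t) := by
  have hS : 0 ≤ sinh t := sinh_nonneg_iff.2 ht
  have he : A ^ 2 - 1 ≤ 0 := sub_nonpos.2 (pow_le_one₀ hA hA1)
  rcases le_or_gt 0 (A ^ 2 + 1 - 2 * m ^ 2) with hq | hq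
  · calc m ^ 2 * (A ^ 2 - 1) * sinh t
        ≤ 0 := mul_nonpos_of_nonpos_of_nonneg
          (mul_nonpos_of_nonneg_of_nonpos (sq_nonneg m) he) hS
      _ ≤ s * (A ^ 2 + 1 - 2 * m ^ 2) * (t * cosh t - sinh t) :=
        mul_nonneg (mul_nonneg hs hq) (sub_nonneg.2 (sinh_le_mul_cosh ht))
  · have hAm : A ≤ m := by nlinarith
    have hpoly : m * (A ^ 2 - 1) ≤ A * (A ^ 2 + 1 - 2 * m ^ 2) := by nlinarith
    calc m ^ 2 * (A ^ 2 - 1) * sinh t = m * sinh t * (m * (A ^ 2 - 1)) := by ring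
      _ ≤ m * sinh t * (A * (A ^ 2 + 1 - 2 * m ^ 2)) := by gcongr
      _ = s * (A ^ 2 + 1 - 2 * m ^ 2) * (t * sinh t) := by
        linear_combination -(A ^ 2 + 1 - 2 * m ^ 2) * sinh t * hts
      _ ≤ s * (A ^ 2 + 1 - 2 * m ^ 2) * (t * cosh t - sinh t) :=
        mul_le_mul_of_nonpos_left (mul_cosh_sub_sinh_le ht)
          (mul_nonpos_of_nonneg_of_nonpos hs hq.le)

lemma sq_mul_sq_sub_one_mul_sinh_le_of_one_le (hA : 1 ≤ A) (hs : 0 ≤ s)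
    (hms : m ^ 2 + s = 1) (ht : 0 ≤ t) (hts : s * t = A * m) :
    m ^ 2 * (A ^ 2 - 1) * sinh t ≤ s * (A ^ 2 + 1 - 2 * m ^ 2) * (t * cosh t - sinh t) := by
  have hA2 : 1 ≤ A ^ 2 := one_le_pow₀ hA
  have hD : 0 ≤ t * cosh t - sinh t := sub_nonneg.2 (sinh_le_mul_cosh ht)
  refine le_of_mul_le_mul_left ?_ (zero_lt_one.trans_le hA2)
  calc A ^ 2 * (m ^ 2 * (A ^ 2 - 1) * sinh t)
      = (A ^ 2 - 1) * s ^ 2 * (t ^ 2 * sinh t) := by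
        linear_combination -(A ^ 2 - 1) * sinh t * (s * t + A * m) * hts
    _ ≤ (A ^ 2 - 1) * s ^ 2 * ((3 + t) * (t * cosh t - sinh t)) :=
        mul_le_mul_of_nonneg_left (sq_mul_sinh_le ht)
          (mul_nonneg (sub_nonneg.2 hA2) (sq_nonneg s))
    _ = s * ((A ^ 2 - 1) * (3 * s + A * m)) * (t * cosh t - sinh t) := by
        linear_combination (A ^ 2 - 1) * s * (t * cosh t - sinh t) * hts
    _ ≤ s * (A ^ 2 * (A ^ 2 + 1 - 2 * m ^ 2)) * (t * cosh t - sinh t) :=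
        mul_le_mul_of_nonneg_right
          (mul_le_mul_of_nonneg_left (sq_sub_one_mul_le hA2 hs hms) hs) hD
    _ = A ^ 2 * (s * (A ^ 2 + 1 - 2 * m ^ 2) * (t * cosh t - sinh t)) := by ring

lemma sq_mul_sq_sub_one_mul_sinh_le (hm : 0 ≤ m) (hA : 0 ≤ A) (hs : 0 ≤ s)
    (hms : m ^ 2 + s = 1) (ht : 0 ≤ t) (hts : s * t = A * m) :
    m ^ 2 * (A ^ 2 - 1) * sinh t ≤ s * (A ^ 2 + 1 - 2 * m ^ 2) * (t * cosh t - sinh t) := by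
  rcases le_total A 1 with hA1 | hA1
  · exact sq_mul_sq_sub_one_mul_sinh_le_of_le_one hm hA hA1 hs hms ht hts
  · exact sq_mul_sq_sub_one_mul_sinh_le_of_one_le hA1 hs hms ht hts

end Hyperbolic

section NormalPDF

variable {μ σ : ℝ}

lemma normalPDF_neg_neg (μ σ x : ℝ) : normalPDF (-μ) σ (-x) = normalPDF μ σ x := by
  simp only [normalPDF]
  ring_nf

lemma hasDerivAt_normalPDF (μ σ x : ℝ) :
    HasDerivAt (normalPDF μ σ) (-((x - μ) / σ ^ 2) * normalPDF μ σ x) x := by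
  have hexponent : HasDerivAt (fun x ↦ -(x - μ) ^ 2 / (2 * σ ^ 2)) (-((x - μ) / σ ^ 2)) x := by
    refine (((((hasDerivAt_id' x).sub_const μ).pow 2).neg).div_const (2 * σ ^ 2)).congr_deriv ?_
    push_cast
    ring
  refine (hexponent.exp.const_mul (1 / (σ * √(2 * π)))).congr_deriv ?_
  simp only [normalPDF]
  ring

lemma hasDerivAt_sq_mul_add_mul_normalPDF (hσ : σ ≠ 0) (x : ℝ) :
    HasDerivAt (fun x ↦ σ ^ 2 * (x + μ) * normalPDF μ σ x)
      ((μ ^ 2 + σ ^ 2 - x ^ 2) * normalPDF μ σ x) x := by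
  refine ((((hasDerivAt_id' x).add_const μ).const_mul (σ ^ 2)).mul
    (hasDerivAt_normalPDF μ σ x)).congr_deriv ?_
  field_simp
  ring

lemma continuous_normalPDF (μ σ : ℝ) : Continuous (normalPDF μ σ) :=
  continuous_iff_continuousAt.2 fun x ↦ (hasDerivAt_normalPDF μ σ x).continuousAt

lemma integral_sub_sq_mul_normalPDF (hσ : σ ≠ 0) (a b : ℝ) :
    ∫ x in a..b, (μ ^ 2 + σ ^ 2 - x ^ 2) * normalPDF μ σ x =
      σ ^ 2 * (b + μ) * normalPDF μ σ b - σ ^ 2 * (a + μ) * normalPDF μ σ a := by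
  have hcont := continuous_normalPDF μ σ
  exact intervalIntegral.integral_eq_sub_of_hasDerivAt
    (fun x _ ↦ hasDerivAt_sq_mul_add_mul_normalPDF hσ x)
    (Continuous.intervalIntegrable (by fun_prop) a b)

lemma normalPDF_eq_mul_exp (hσ : σ ≠ 0) (x : ℝ) :
    normalPDF μ σ x =
      1 / (σ * √(2 * π)) * exp (-(x ^ 2 + μ ^ 2) / (2 * σ ^ 2)) * exp (x * μ / σ ^ 2) := by
  rw [normalPDF, mul_assoc, ← exp_add]
  congr 2
  field_simp
  ring

lemma integral_neg_self_sub_sq_mul_normalPDF (hσ : σ ≠ 0) (A : ℝ) :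
    ∫ x in (-A)..A, (μ ^ 2 + σ ^ 2 - x ^ 2) * normalPDF μ σ x =
      2 / √(2 * π) * (σ * exp (-(A ^ 2 + μ ^ 2) / (2 * σ ^ 2)) *
        (A * cosh (A * μ / σ ^ 2) + μ * sinh (A * μ / σ ^ 2))) := by
  rw [integral_sub_sq_mul_normalPDF hσ, normalPDF_eq_mul_exp hσ, normalPDF_eq_mul_exp hσ, neg_sq,
    neg_mul, neg_div (σ ^ 2) (A * μ), cosh_eq, sinh_eq]
  field_simp
  ring

end NormalPDF

/-- The expected payoff, against a realization of absolute value `A`, of the normal distribution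
with bias `m` and total error `1`. -/
noncomputable def expectedPayoff (A m : ℝ) : ℝ :=
  ∫ x in (-A)..A, (1 - x ^ 2) * normalPDF m √(1 - m ^ 2) x

section ExpectedPayoff

variable {A m : ℝ}

lemma expectedPayoff_neg (A m : ℝ) : expectedPayoff A (-m) = expectedPayoff A m := by
  rw [expectedPayoff, ← neg_neg A, ← intervalIntegral.integral_comp_neg]
  simp only [neg_sq, normalPDF_neg_neg, neg_neg, expectedPayoff]

lemma expectedPayoff_abs (A m : ℝ) : expectedPayoff A |m| = expectedPayoff A m := by
  rcases abs_choice m with h | h <;> rw [h]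
  exact expectedPayoff_neg A m

lemma expectedPayoff_eq (hm : 0 < 1 - m ^ 2) :
    expectedPayoff A m =
      2 / √(2 * π) * (√(1 - m ^ 2) * exp (-(A ^ 2 + m ^ 2) / (2 * (1 - m ^ 2))) *
        (A * cosh (A * m / (1 - m ^ 2)) + m * sinh (A * m / (1 - m ^ 2)))) := by
  have h := integral_neg_self_sub_sq_mul_normalPDF (μ := m) (sqrt_pos.2 hm).ne' A
  rwa [sq_sqrt hm.le, add_sub_cancel] at h

lemma hasDerivAt_one_sub_sq (m : ℝ) : HasDerivAt (fun m : ℝ ↦ 1 - m ^ 2) (-(2 * m)) m := by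
  simpa using (hasDerivAt_pow 2 m).const_sub 1

lemma hasDerivAt_sqrt_one_sub_sq (hm : 0 < 1 - m ^ 2) :
    HasDerivAt (fun m ↦ √(1 - m ^ 2)) (√(1 - m ^ 2) * (-m / (1 - m ^ 2))) m := by
  refine ((hasDerivAt_one_sub_sq m).sqrt hm.ne').congr_deriv ?_
  field_simp
  rw [sq_sqrt hm.le]

lemma hasDerivAt_neg_add_sq_div (A : ℝ) (hm : 1 - m ^ 2 ≠ 0) :
    HasDerivAt (fun m ↦ -(A ^ 2 + m ^ 2) / (2 * (1 - m ^ 2)))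
      (-(m * (A ^ 2 + 1)) / (1 - m ^ 2) ^ 2) m := by
  refine (((hasDerivAt_pow 2 m).const_add (A ^ 2)).neg.div
    ((hasDerivAt_one_sub_sq m).const_mul 2) (mul_ne_zero two_ne_zero hm)).congr_deriv ?_
  simp only [Pi.neg_apply, Nat.cast_ofNat]
  field_simp
  ring

lemma hasDerivAt_mul_div_one_sub_sq (A : ℝ) (hm : 1 - m ^ 2 ≠ 0) :
    HasDerivAt (fun m ↦ A * m / (1 - m ^ 2)) (A * (1 + m ^ 2) / (1 - m ^ 2) ^ 2) m := by
  refine (((hasDerivAt_id' m).const_mul A).div (hasDerivAt_one_sub_sq m) hm).congr_deriv ?_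
  ring

lemma hasDerivAt_expectedPayoff (A : ℝ) (hm : 0 < 1 - m ^ 2) :
    HasDerivAt (expectedPayoff A)
      (2 / √(2 * π) * (√(1 - m ^ 2) * exp (-(A ^ 2 + m ^ 2) / (2 * (1 - m ^ 2))) *
        ((m ^ 2 * (A ^ 2 - 1) * sinh (A * m / (1 - m ^ 2)) -
          (1 - m ^ 2) * (A ^ 2 + 1 - 2 * m ^ 2) *
            (A * m / (1 - m ^ 2) * cosh (A * m / (1 - m ^ 2)) - sinh (A * m / (1 - m ^ 2)))) /
          (1 - m ^ 2) ^ 2))) m := by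
  have heq : expectedPayoff A =ᶠ[nhds m] fun m ↦
      2 / √(2 * π) * (√(1 - m ^ 2) * exp (-(A ^ 2 + m ^ 2) / (2 * (1 - m ^ 2))) *
        (A * cosh (A * m / (1 - m ^ 2)) + m * sinh (A * m / (1 - m ^ 2)))) :=
    ((hasDerivAt_one_sub_sq m).continuousAt.eventually (lt_mem_nhds hm)).mono
      fun _ hx ↦ expectedPayoff_eq hx
  have hweight := (hasDerivAt_sqrt_one_sub_sq hm).mul (hasDerivAt_neg_add_sq_div A hm.ne').exp
  have ht := hasDerivAt_mul_div_one_sub_sq A hm.ne'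
  have hhyp := (ht.cosh.const_mul A).add ((hasDerivAt_id' m).mul ht.sinh)
  refine (((hweight.mul hhyp).const_mul (2 / √(2 * π))).congr_deriv ?_).congr_of_eventuallyEq heq
  simp only [Pi.add_apply, Pi.mul_apply]
  field_simp
  ring

lemma antitoneOn_expectedPayoff (hA : 0 ≤ A) : AntitoneOn (expectedPayoff A) (Ico 0 1) := by
  have hvar {m : ℝ} (hm : m ∈ Ico 0 1) : 0 < 1 - m ^ 2 :=
    sub_pos.2 (pow_lt_one₀ hm.1 hm.2 two_ne_zero)
  refine antitoneOn_of_hasDerivWithinAt_nonpos (convex_Ico 0 1)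
    (fun m hm ↦ (hasDerivAt_expectedPayoff A (hvar hm)).continuousAt.continuousWithinAt)
    (fun m hm ↦ (hasDerivAt_expectedPayoff A (hvar (interior_subset hm))).hasDerivWithinAt)
    fun m hm ↦ ?_
  replace hm := interior_subset hm
  have hs := hvar hm
  have hkey := sq_mul_sq_sub_one_mul_sinh_le hm.1 hA hs.le (add_sub_cancel _ _)
    (div_nonneg (mul_nonneg hA hm.1) hs.le) (mul_div_cancel₀ _ hs.ne')
  refine mul_nonpos_of_nonneg_of_nonpos (by positivity) ?_
  refine mul_nonpos_of_nonneg_of_nonpos (by positivity) ?_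
  exact div_nonpos_of_nonpos_of_nonneg (sub_nonpos.2 hkey) (sq_nonneg _)

end ExpectedPayoff

theorem lower_bias_normal_under_tradeoff_general {μ ν : ℝ} (hνμ : |ν| ≤ |μ|) (hμ1 : |μ| < 1)
    (a : ℝ) :
    ∫ x in (-|a|)..|a|, (1 - x^2) * normalPDF ν (Real.sqrt (1 - ν^2)) x
      ≥ ∫ x in (-|a|)..|a|, (1 - x^2) * normalPDF μ (Real.sqrt (1 - μ^2)) x := by
  change expectedPayoff |a| μ ≤ expectedPayoff |a| ν
  rw [← expectedPayoff_abs _ μ, ← expectedPayoff_abs _ ν]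
  exact antitoneOn_expectedPayoff (abs_nonneg a) ⟨abs_nonneg ν, hνμ.trans_lt hμ1⟩
    ⟨abs_nonneg μ, hμ1⟩ hνμ

theorem lower_bias_normal_under_tradeoff (μ ν : ℝ) (hν0 : 0 ≤ ν) (hνμ : ν ≤ μ)
    (hμ1 : μ < 1) (a : ℝ) :
    ∫ x in (-|a|)..|a|, (1 - x^2) * normalPDF ν (Real.sqrt (1 - ν^2)) x
      ≥ ∫ x in (-|a|)..|a|, (1 - x^2) * normalPDF μ (Real.sqrt (1 - μ^2)) x :=
  lower_bias_normal_under_tradeoff_general (abs_le_abs_of_nonneg hν0 hνμ)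
    ((abs_of_nonneg (hν0.trans hνμ)).trans_lt hμ1) a
end

section
/- For all μ ∈ [0, 1) and all a > 1, [(2μ² − a² − 1)(1 − aμ) + 2μ²(1 − μ²)] · exp(aμ/(1 − μ²)) − [(2μ² − a² − 1)(1 + aμ) + 2μ²(1 − μ²)] · exp(−aμ/(1 − μ²)) ≥ 0. -/
/-!
Put `s = 1 - μ²` and `t = aμ / s`. The difference of exponentials is twice
`K · aμ · cosh t - D · sinh t`, where `K = a² + 1 - 2μ²` and `D = a² - 1 + 2s² = K - 2μ²s`, so the
claim compares `tanh t` with a rational function of `μ` and `a`. If `D ≥ 0`, the upper bound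
`tanh t ≤ t(3 + t) / (3 + t + t²)` leaves a polynomial inequality; it comes from the Padé
approximant `e^u ≤ (3 + 2u + u²/2) / (3 - u)` at `u = 2t`. If `K ≤ 0`, the lower bound
`tanh t ≥ t / (1 + t)` suffices in the same way. If `D ≤ 0 ≤ K`, the signs decide.
-/

open Real Set

lemma monotoneOn_exp_neg_mul_quadratic_add_self :
    MonotoneOn (fun u : ℝ => exp (-u) * (3 + 2 * u + u ^ 2 / 2) + u) (Ici 0) := by
  have hasDeriv (x : ℝ) : HasDerivAt (fun u : ℝ => exp (-u) * (3 + 2 * u + u ^ 2 / 2) + u)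
      (1 - exp (-x) * (1 + x + x ^ 2 / 2)) x := by
    have hexp : HasDerivAt (fun u : ℝ => exp (-u)) (exp (-x) * -1) x := (hasDerivAt_neg x).exp
    have hquad : HasDerivAt (fun u : ℝ => 3 + 2 * u + u ^ 2 / 2) (2 * 1 + 2 * x / 2) x := by
      have hsq : HasDerivAt (fun u : ℝ => u ^ 2) (2 * x) x := by simpa using hasDerivAt_pow 2 x
      exact (((hasDerivAt_id x).const_mul 2).const_add 3).add (hsq.div_const 2)
    exact ((hexp.mul hquad).add (hasDerivAt_id x)).congr_deriv (by ring)
  refine monotoneOn_of_hasDerivWithinAt_nonneg (convex_Ici 0)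
    (fun x _ => (hasDeriv x).continuousAt.continuousWithinAt)
    (fun x _ => (hasDeriv x).hasDerivWithinAt) fun x hx => ?_
  rw [interior_Ici] at hx
  rw [sub_nonneg, exp_neg, inv_mul_le_one₀ (exp_pos x)]
  exact quadratic_le_exp_of_nonneg hx.le

lemma three_sub_mul_exp_le {u : ℝ} (hu : 0 ≤ u) :
    (3 - u) * exp u ≤ 3 + 2 * u + u ^ 2 / 2 := by
  have hmono := monotoneOn_exp_neg_mul_quadratic_add_self self_mem_Ici hu hu
  have hdiv : 3 - u ≤ (3 + 2 * u + u ^ 2 / 2) / exp u := by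
    rw [div_eq_mul_inv, ← exp_neg]
    norm_num at hmono
    linarith
  exact (le_div_iff₀ (exp_pos u)).mp hdiv

lemma three_add_add_sq_mul_sinh_le {t : ℝ} (ht : 0 ≤ t) :
    (3 + t + t ^ 2) * sinh t ≤ t * (3 + t) * cosh t := by
  have hpade : (3 - 2 * t) * exp t ≤ (3 + 4 * t + 2 * t ^ 2) * exp (-t) := by
    rw [exp_neg, ← div_eq_mul_inv, le_div_iff₀ (exp_pos t), mul_assoc, ← exp_add, ← two_mul]
    linarith [three_sub_mul_exp_le (mul_nonneg zero_le_two ht)]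
  rw [sinh_eq, cosh_eq]
  linarith

lemma mul_cosh_le_one_add_mul_sinh (t : ℝ) : t * cosh t ≤ (1 + t) * sinh t := by
  have hexp : (1 + 2 * t) * exp (-t) ≤ exp t := by
    rw [exp_neg, ← div_eq_mul_inv, div_le_iff₀ (exp_pos t), ← exp_add, ← two_mul]
    linarith [add_one_le_exp (2 * t)]
  rw [sinh_eq, cosh_eq]
  linarith

section HyperbolicForm

variable {μ a : ℝ}

lemma sinh_coeff_mul_le_cosh_coeff_mul (hμ0 : 0 ≤ μ) (hμ1 : μ ≤ 1) (ha : 0 ≤ a) :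
    (a ^ 2 - 1 + 2 * (1 - μ ^ 2) ^ 2) * (3 * (1 - μ ^ 2) + a * μ) ≤
      (a ^ 2 + 1 - 2 * μ ^ 2) *
        (3 * (1 - μ ^ 2) ^ 2 + a * μ * (1 - μ ^ 2) + (a * μ) ^ 2) := by
  have : 0 ≤ 1 - μ := sub_nonneg.mpr hμ1
  have hgap : 0 ≤ μ ^ 2 * ((1 - μ) * ((1 - μ) * ((a ^ 2 - 1) ^ 2 + 2) +
      μ * ((a ^ 2 - 3 / 2) ^ 2 + 15 / 4)) + μ * (a * (a - 1) ^ 2 * (a + 1))) := by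
    positivity
  linear_combination hgap

lemma critical_inequality_sinh_cosh_of_sinh_coeff_nonneg (hμ0 : 0 ≤ μ) (hμ1 : μ < 1) (ha : 0 ≤ a)
    (hD : 0 ≤ a ^ 2 - 1 + 2 * (1 - μ ^ 2) ^ 2) :
    (a ^ 2 - 1 + 2 * (1 - μ ^ 2) ^ 2) * sinh (a * μ / (1 - μ ^ 2)) ≤
      (a ^ 2 + 1 - 2 * μ ^ 2) * (a * μ) * cosh (a * μ / (1 - μ ^ 2)) := by
  have hcoeff := sinh_coeff_mul_le_cosh_coeff_mul hμ0 hμ1.le ha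
  have hs : 0 < 1 - μ ^ 2 := by nlinarith
  have hx : 0 ≤ a * μ := mul_nonneg ha hμ0
  set s := 1 - μ ^ 2
  set x := a * μ
  set D := a ^ 2 - 1 + 2 * s ^ 2
  set K := a ^ 2 + 1 - 2 * μ ^ 2
  have htanh : (3 * s ^ 2 + x * s + x ^ 2) * sinh (x / s) ≤ x * (3 * s + x) * cosh (x / s) := by
    have hscaled := mul_le_mul_of_nonneg_left (three_add_add_sq_mul_sinh_le (div_nonneg hx hs.le))
      (sq_nonneg s)
    field_simp at hscaled
    linarith
  have hpos : 0 < 3 * s ^ 2 + x * s + x ^ 2 := by positivity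
  refine le_of_mul_le_mul_left ?_ hpos
  calc (3 * s ^ 2 + x * s + x ^ 2) * (D * sinh (x / s))
      = D * ((3 * s ^ 2 + x * s + x ^ 2) * sinh (x / s)) := by ring
    _ ≤ D * (x * (3 * s + x) * cosh (x / s)) := by gcongr
    _ = D * (3 * s + x) * (x * cosh (x / s)) := by ring
    _ ≤ K * (3 * s ^ 2 + x * s + x ^ 2) * (x * cosh (x / s)) := by gcongr
    _ = (3 * s ^ 2 + x * s + x ^ 2) * (K * x * cosh (x / s)) := by ring

lemma critical_inequality_sinh_cosh_of_cosh_coeff_nonpos (hμ0 : 0 ≤ μ) (hμ1 : μ < 1) (ha : 0 ≤ a)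
    (hK : a ^ 2 + 1 - 2 * μ ^ 2 ≤ 0) :
    (a ^ 2 - 1 + 2 * (1 - μ ^ 2) ^ 2) * sinh (a * μ / (1 - μ ^ 2)) ≤
      (a ^ 2 + 1 - 2 * μ ^ 2) * (a * μ) * cosh (a * μ / (1 - μ ^ 2)) := by
  have hs : 0 < 1 - μ ^ 2 := by nlinarith
  have haμ : a ≤ μ := by nlinarith
  have hcoeff : a ^ 2 - 1 + 2 * (1 - μ ^ 2) ^ 2 ≤
      (a ^ 2 + 1 - 2 * μ ^ 2) * (1 - μ ^ 2 + a * μ) := by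
    have hgap : 0 ≤ μ * ((a ^ 2 + 1 - 2 * μ ^ 2) * (a - μ)) + 2 * μ ^ 2 * (1 - μ ^ 2) :=
      add_nonneg (mul_nonneg hμ0 (mul_nonneg_of_nonpos_of_nonpos hK (sub_nonpos.mpr haμ)))
        (by positivity)
    linear_combination hgap
  have hx : 0 ≤ a * μ := mul_nonneg ha hμ0
  set s := 1 - μ ^ 2
  set x := a * μ
  set D := a ^ 2 - 1 + 2 * s ^ 2
  set K := a ^ 2 + 1 - 2 * μ ^ 2
  have : 0 ≤ sinh (x / s) := sinh_nonneg_iff.mpr (div_nonneg hx hs.le)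
  have htanh : x * cosh (x / s) ≤ (s + x) * sinh (x / s) := by
    have hscaled := mul_le_mul_of_nonneg_left (mul_cosh_le_one_add_mul_sinh (x / s)) hs.le
    field_simp at hscaled
    linarith
  calc D * sinh (x / s) ≤ K * (s + x) * sinh (x / s) := by gcongr
    _ = K * ((s + x) * sinh (x / s)) := by ring
    _ ≤ K * (x * cosh (x / s)) := mul_le_mul_of_nonpos_left htanh hK
    _ = K * x * cosh (x / s) := by ring

lemma critical_inequality_sinh_cosh (hμ0 : 0 ≤ μ) (hμ1 : μ < 1) (ha : 0 ≤ a) :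
    (a ^ 2 - 1 + 2 * (1 - μ ^ 2) ^ 2) * sinh (a * μ / (1 - μ ^ 2)) ≤
      (a ^ 2 + 1 - 2 * μ ^ 2) * (a * μ) * cosh (a * μ / (1 - μ ^ 2)) := by
  rcases le_total 0 (a ^ 2 - 1 + 2 * (1 - μ ^ 2) ^ 2) with hD | hD
  · exact critical_inequality_sinh_cosh_of_sinh_coeff_nonneg hμ0 hμ1 ha hD
  rcases le_total (a ^ 2 + 1 - 2 * μ ^ 2) 0 with hK | hK
  · exact critical_inequality_sinh_cosh_of_cosh_coeff_nonpos hμ0 hμ1 ha hK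
  have hs : 0 < 1 - μ ^ 2 := by nlinarith
  have hsinh : 0 ≤ sinh (a * μ / (1 - μ ^ 2)) := sinh_nonneg_iff.mpr (by positivity)
  calc (a ^ 2 - 1 + 2 * (1 - μ ^ 2) ^ 2) * sinh (a * μ / (1 - μ ^ 2))
      ≤ 0 := mul_nonpos_of_nonpos_of_nonneg hD hsinh
    _ ≤ (a ^ 2 + 1 - 2 * μ ^ 2) * (a * μ) * cosh (a * μ / (1 - μ ^ 2)) := by positivity

end HyperbolicForm

theorem critical_inequality_large_a_general (μ a : ℝ) (hμ0 : 0 ≤ μ) (hμ1 : μ < 1) (ha : 0 ≤ a) :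
    ((2*μ^2 - a^2 - 1)*(1 - a*μ) + 2*μ^2*(1 - μ^2)) * Real.exp (a*μ/(1 - μ^2))
      - ((2*μ^2 - a^2 - 1)*(1 + a*μ) + 2*μ^2*(1 - μ^2)) * Real.exp (-(a*μ)/(1 - μ^2)) ≥ 0 := by
  have hyperbolic := critical_inequality_sinh_cosh hμ0 hμ1 ha
  rw [sinh_eq, cosh_eq] at hyperbolic
  rw [neg_div]
  linear_combination 2 * hyperbolic

theorem critical_inequality_large_a (μ a : ℝ) (hμ0 : 0 ≤ μ) (hμ1 : μ < 1) (ha : 1 < a) :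
    ((2*μ^2 - a^2 - 1)*(1 - a*μ) + 2*μ^2*(1 - μ^2)) * Real.exp (a*μ/(1 - μ^2))
      - ((2*μ^2 - a^2 - 1)*(1 + a*μ) + 2*μ^2*(1 - μ^2)) * Real.exp (-(a*μ)/(1 - μ^2)) ≥ 0 :=
  critical_inequality_large_a_general μ a hμ0 hμ1 (zero_le_one.trans ha.le)
end

section
/- For all μ ∈ [0, 1) and all a ≥ 1, [a³μ² + μ³ + a²μ(2 − 3μ²) − a(2 − 3μ² + 2μ⁴)] · exp(aμ/(1 − μ²)) − [a³μ² − μ³ − a²μ(2 − 3μ²) − a(2 − 3μ² + 2μ⁴)] · exp(−aμ/(1 − μ²)) ≥ 0. -/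
/-!
Put `s = 1 - μ ^ 2` and `x = a * μ / s`. Multiplied by `μ`, the expression becomes
`2 * (A * sinh x + B * cosh x)`, where `A` and `B` are polynomials in `s` and `x`, and it is even
in `x`. For `0 ≤ x` one replaces `tanh x` by an elementary bound: below by `x / (1 + x)` when
`0 ≤ A`, and above, when `A ≤ 0`, by `4 * x / (4 + x ^ 2)` for `x ≤ 2` and by `1` for `2 ≤ x`.
In each case there remains a polynomial inequality, proved by writing the polynomial as a sum of
nonnegative terms.
-/

section HyperbolicBounds

variable {x : ℝ}

lemma sinh_le_mul_cosh_s10 (hx : 0 ≤ x) : Real.sinh x ≤ x * Real.cosh x := by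
  have deriv_le : ∀ y ∈ interior (Set.Icc 0 x), deriv Real.sinh y ≤ Real.cosh x := by
    intro y hy
    rw [interior_Icc] at hy
    rw [Real.deriv_sinh, Real.cosh_le_cosh, abs_of_pos hy.1, abs_of_nonneg hx]
    exact hy.2.le
  have mean_value := (convex_Icc 0 x).image_sub_le_mul_sub_of_deriv_le
    Real.continuous_sinh.continuousOn Real.differentiable_sinh.differentiableOn deriv_le
    0 (Set.left_mem_Icc.2 hx) x (Set.right_mem_Icc.2 hx) hx
  simpa [mul_comm] using mean_value

lemma mul_cosh_le_one_add_mul_sinh_s10 (hx : 0 ≤ x) :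
    x * Real.cosh x ≤ (1 + x) * Real.sinh x := by
  have : x * Real.exp (-x) ≤ Real.sinh x :=
    calc x * Real.exp (-x) ≤ x :=
          mul_le_of_le_one_right hx (Real.exp_le_one_iff.2 (neg_nonpos.2 hx))
      _ ≤ Real.sinh x := Real.self_le_sinh_iff.2 hx
  rw [← Real.cosh_sub_sinh] at this
  linarith

/-- With `t = tanh (x / 2)`, this is `tanh x = 2 * t / (1 + t ^ 2)` together with `t ≤ x / 2`, as
`t ↦ 2 * t / (1 + t ^ 2)` is increasing on `[0, 1]`. -/
lemma four_add_sq_mul_sinh_le (hx₀ : 0 ≤ x) (hx₂ : x ≤ 2) :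
    (4 + x ^ 2) * Real.sinh x ≤ 4 * x * Real.cosh x := by
  obtain ⟨u, rfl⟩ : ∃ u, x = 2 * u := ⟨x / 2, by ring⟩
  have hu₀ : 0 ≤ u := by linarith
  have sinh_le : Real.sinh u ≤ u * Real.cosh u := sinh_le_mul_cosh_s10 hu₀
  have mul_sinh_le : u * Real.sinh u ≤ Real.cosh u :=
    calc u * Real.sinh u ≤ Real.sinh u :=
          mul_le_of_le_one_left (Real.sinh_nonneg_iff.2 hu₀) (by linarith)
      _ ≤ Real.cosh u := (Real.sinh_lt_cosh u).le
  rw [Real.sinh_two_mul, Real.cosh_two_mul]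
  linarith [mul_nonneg (sub_nonneg.2 sinh_le) (sub_nonneg.2 mul_sinh_le)]

end HyperbolicBounds

/-- The coefficient of `sinh x` in the inequality for `s = 1 - μ ^ 2` and `s * x = a * μ`: it is
`μ / 2` times the sum of the two brackets of the statement. -/
def sinhCoeff (s x : ℝ) : ℝ := s * x * ((s * x) ^ 2 - (1 - s + 2 * s ^ 2))

/-- The coefficient of `cosh x` accompanying `sinhCoeff`: it is `μ / 2` times the difference of the
two brackets. -/
def coshCoeff (s x : ℝ) : ℝ := (1 - s) ^ 2 - (1 - 3 * s) * (s * x) ^ 2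

section PolynomialBounds

variable {s x : ℝ}

lemma sinhCoeff_mul_add_coshCoeff_mul_one_add_nonneg (hs₀ : 0 ≤ s) (hs₁ : s ≤ 1) (hx : 0 ≤ x)
    (hsx : 3 / 4 ≤ s * x) : 0 ≤ sinhCoeff s x * x + coshCoeff s x * (1 + x) := by
  have expansion : sinhCoeff s x * x + coshCoeff s x * (1 + x) =
      x * (s * x - 1) ^ 2 * (s * x + 1) + (1 - s) * (3 * (s * x) ^ 3 - 2 * (s * x) + 1)
        + s * (3 * (s * x) ^ 3 + (s * x) ^ 2 - s * x - 1) + s ^ 2 := by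
    unfold sinhCoeff coshCoeff
    ring
  rw [expansion]
  generalize s * x = y at hsx ⊢
  have : 0 ≤ y := by linarith
  have : 0 ≤ 1 - s := sub_nonneg.2 hs₁
  have coeff_one_sub : 0 ≤ 3 * y ^ 3 - 2 * y + 1 := by nlinarith [sq_nonneg (y - 3 / 4)]
  have coeff_s : 0 ≤ 3 * y ^ 3 + y ^ 2 - y - 1 := by
    nlinarith [mul_nonneg (sub_nonneg.2 hsx) (sq_nonneg y)]
  positivity

lemma sinhCoeff_mul_add_coshCoeff_mul_four_add_sq_nonneg (hs₀ : 0 ≤ s) (hs₁ : s ≤ 1)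
    (hx : x ^ 2 ≤ 4) : 0 ≤ sinhCoeff s x * (4 * x) + coshCoeff s x * (4 + x ^ 2) := by
  have expansion : sinhCoeff s x * (4 * x) + coshCoeff s x * (4 + x ^ 2) =
      (2 * (1 - s) - s * (1 + s) * x ^ 2) ^ 2
        + x ^ 2 * ((1 - s) ^ 2 + (5 * s - 2 - s ^ 2) * s ^ 2 * x ^ 2) := by
    unfold sinhCoeff coshCoeff
    ring
  have : 0 ≤ 1 - s := sub_nonneg.2 hs₁
  have endpoint : 0 ≤ (1 - s) ^ 2 + (5 * s - 2 - s ^ 2) * s ^ 2 * 4 := by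
    calc 0 ≤ (16 * s + 29 / 5) * (s - 2 / 5) ^ 2 + 4 * s ^ 3 * (1 - s) + (10 * s + 9) / 125 := by
          positivity
      _ = (1 - s) ^ 2 + (5 * s - 2 - s ^ 2) * s ^ 2 * 4 := by ring
  -- The bracket is affine in `x ^ 2`, so its values at `0` and `4` decide its sign on `[0, 4]`.
  have bracket : 0 ≤ (1 - s) ^ 2 + (5 * s - 2 - s ^ 2) * s ^ 2 * x ^ 2 := by
    nlinarith [mul_nonneg (sq_nonneg x) endpoint, mul_nonneg (sub_nonneg.2 hx) (sq_nonneg (1 - s))]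
  rw [expansion]
  positivity

lemma sinhCoeff_add_coshCoeff_nonneg (hs₀ : 0 ≤ s) (hs₁ : s ≤ 1) (hx : 2 ≤ x) :
    0 ≤ sinhCoeff s x + coshCoeff s x := by
  have expansion : sinhCoeff s x + coshCoeff s x =
      (s * x - (1 - s)) ^ 2 + s * x * ((1 - s) * (1 - s * x) ^ 2 + s * (s * x) ^ 2)
        + s ^ 3 * x * (x - 2) := by
    unfold sinhCoeff coshCoeff
    ring
  have : 0 ≤ 1 - s := sub_nonneg.2 hs₁
  have : 0 ≤ x - 2 := sub_nonneg.2 hx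
  have : 0 ≤ x := by linarith
  rw [expansion]
  positivity

end PolynomialBounds

/-- The quotient `k / l` stands for a bound on `S / C` from the side given by the sign of `A`. -/
lemma mul_add_mul_nonneg_of_mul_le {A B S C k l : ℝ} (hl : 0 < l) (hC : 0 ≤ C)
    (bound : A * (k * C) ≤ A * (l * S)) (h : 0 ≤ A * k + B * l) : 0 ≤ A * S + B * C := by
  refine (mul_nonneg_iff_of_pos_left hl).1 ?_
  calc 0 ≤ (A * k + B * l) * C := mul_nonneg h hC
    _ = A * (k * C) + l * (B * C) := by ring
    _ ≤ A * (l * S) + l * (B * C) := by gcongr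
    _ = l * (A * S + B * C) := by ring

section HyperbolicInequality

variable {s x : ℝ}

lemma sinhCoeff_mul_sinh_add_coshCoeff_mul_cosh_nonneg_of_nonneg (hs₀ : 0 ≤ s) (hs₁ : s ≤ 1)
    (hx₀ : 0 ≤ x) : 0 ≤ sinhCoeff s x * Real.sinh x + coshCoeff s x * Real.cosh x := by
  have hsx : 0 ≤ s * x := mul_nonneg hs₀ hx₀
  have hcosh : 0 ≤ Real.cosh x := (Real.cosh_pos x).le
  rcases le_total (1 - s + 2 * s ^ 2) ((s * x) ^ 2) with large | small
  · have hA : 0 ≤ sinhCoeff s x := mul_nonneg hsx (sub_nonneg.2 large)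
    have hsx' : 3 / 4 ≤ s * x := by nlinarith [sq_nonneg (s - 1 / 4)]
    exact mul_add_mul_nonneg_of_mul_le (by linarith) hcosh
      (mul_le_mul_of_nonneg_left (mul_cosh_le_one_add_mul_sinh_s10 hx₀) hA)
      (sinhCoeff_mul_add_coshCoeff_mul_one_add_nonneg hs₀ hs₁ hx₀ hsx')
  · have hA : sinhCoeff s x ≤ 0 := mul_nonpos_of_nonneg_of_nonpos hsx (sub_nonpos.2 small)
    rcases le_total x 2 with hx₂ | hx₂
    · exact mul_add_mul_nonneg_of_mul_le (by positivity) hcosh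
        (mul_le_mul_of_nonpos_left (four_add_sq_mul_sinh_le hx₀ hx₂) hA)
        (sinhCoeff_mul_add_coshCoeff_mul_four_add_sq_nonneg hs₀ hs₁ (by nlinarith))
    · calc 0 ≤ (sinhCoeff s x + coshCoeff s x) * Real.cosh x :=
            mul_nonneg (sinhCoeff_add_coshCoeff_nonneg hs₀ hs₁ hx₂) hcosh
        _ = sinhCoeff s x * Real.cosh x + coshCoeff s x * Real.cosh x := add_mul _ _ _
        _ ≤ sinhCoeff s x * Real.sinh x + coshCoeff s x * Real.cosh x := by
          gcongr ?_ + _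
          exact mul_le_mul_of_nonpos_left (Real.sinh_lt_cosh x).le hA

lemma sinhCoeff_mul_sinh_add_coshCoeff_mul_cosh_nonneg (hs₀ : 0 ≤ s) (hs₁ : s ≤ 1) :
    0 ≤ sinhCoeff s x * Real.sinh x + coshCoeff s x * Real.cosh x := by
  rcases le_total 0 x with hx | hx
  · exact sinhCoeff_mul_sinh_add_coshCoeff_mul_cosh_nonneg_of_nonneg hs₀ hs₁ hx
  · simpa [sinhCoeff, coshCoeff] using
      sinhCoeff_mul_sinh_add_coshCoeff_mul_cosh_nonneg_of_nonneg hs₀ hs₁ (neg_nonneg.2 hx)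

end HyperbolicInequality

theorem derivative_inequality_first_level_general (μ a : ℝ) (hμ0 : 0 ≤ μ) (hμ1 : μ < 1) :
    (a^3*μ^2 + μ^3 + a^2*μ*(2 - 3*μ^2) - a*(2 - 3*μ^2 + 2*μ^4)) * Real.exp (a*μ/(1 - μ^2))
      - (a^3*μ^2 - μ^3 - a^2*μ*(2 - 3*μ^2) - a*(2 - 3*μ^2 + 2*μ^4))
        * Real.exp (-(a*μ)/(1 - μ^2)) ≥ 0 := by
  rcases hμ0.eq_or_lt with rfl | hμ
  · simp
  have hs : 0 < 1 - μ ^ 2 := by nlinarith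
  have key := sinhCoeff_mul_sinh_add_coshCoeff_mul_cosh_nonneg
    (x := a * μ / (1 - μ ^ 2)) hs.le (sub_le_self 1 (sq_nonneg μ))
  rw [sinhCoeff, coshCoeff, mul_div_cancel₀ _ hs.ne', Real.sinh_eq, Real.cosh_eq] at key
  rw [neg_div]
  refine (mul_nonneg_iff_of_pos_left hμ).1 ?_
  linarith

theorem derivative_inequality_first_level (μ a : ℝ) (hμ0 : 0 ≤ μ) (hμ1 : μ < 1) (ha : 1 ≤ a) :
    (a^3*μ^2 + μ^3 + a^2*μ*(2 - 3*μ^2) - a*(2 - 3*μ^2 + 2*μ^4)) * Real.exp (a*μ/(1 - μ^2))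
      - (a^3*μ^2 - μ^3 - a^2*μ*(2 - 3*μ^2) - a*(2 - 3*μ^2 + 2*μ^4)) * Real.exp (-(a*μ)/(1 - μ^2)) ≥ 0 :=
  derivative_inequality_first_level_general μ a hμ0 hμ1
end

section
/- For all μ ∈ [0, 1), [1 − μ − 5μ² + 3μ³ + 5μ⁴ − 2μ⁵ − μ⁶] · exp(μ/(1 − μ²)) − [1 + μ − 5μ² − 3μ³ + 5μ⁴ + 2μ⁵ − μ⁶] · exp(−μ/(1 − μ²)) ≤ 0. -/
/-!
With `x = μ / (1 - μ ^ 2)`, the two polynomials are `(1 - μ ^ 2) ^ 3` times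
`(1 - 2 * x ^ 2) ∓ x * (1 - μ * x)`, so the left-hand side equals
`2 * (1 - μ ^ 2) ^ 3 * ((1 - 2 * x ^ 2) * sinh x - x * (1 - μ * x) * cosh x)`.
For `0 ≤ x` the sign of the last factor follows from `x / (1 + x) ≤ tanh x ≤ x`, the upper bound
serving where `1 - 2 * x ^ 2` is nonnegative and the lower one where it is negative.
For `1 < μ` both `x` and the cube are negative; since the last factor is odd in `(x, μ)`, the same
estimate applies to `-x`, the product `μ * x` keeping its value.
-/

open Real

lemma sinh_le_self_mul_cosh {x : ℝ} (hx : 0 ≤ x) : sinh x ≤ x * cosh x := by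
  have hderiv : ∀ y ∈ interior (Set.Icc 0 x), deriv sinh y ≤ cosh x := by
    intro y hy
    rw [interior_Icc] at hy
    rw [Real.deriv_sinh, cosh_le_cosh, abs_of_pos hy.1, abs_of_nonneg hx]
    exact hy.2.le
  have hmvt := (convex_Icc 0 x).image_sub_le_mul_sub_of_deriv_le continuous_sinh.continuousOn
    differentiable_sinh.differentiableOn hderiv 0 (Set.left_mem_Icc.2 hx) x
    (Set.right_mem_Icc.2 hx) hx
  simpa [mul_comm] using hmvt

lemma self_mul_cosh_le_one_add_mul_sinh (x : ℝ) : x * cosh x ≤ (1 + x) * sinh x := by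
  have hexp : (2 * x + 1) * exp (-x) ≤ exp x := by
    calc (2 * x + 1) * exp (-x) ≤ exp (2 * x) * exp (-x) := by
          gcongr
          exact add_one_le_exp (2 * x)
      _ = exp x := by rw [← exp_add]; ring_nf
  rw [cosh_eq, sinh_eq]
  linarith

lemma one_sub_two_mul_sq_mul_sinh_le {x w : ℝ} (hx : 0 ≤ x) (hwx : w ≤ x)
    (hwx2 : w ≤ 2 * x ^ 2) : (1 - 2 * x ^ 2) * sinh x ≤ x * (1 - w) * cosh x := by
  rcases le_total 0 (1 - 2 * x ^ 2) with hnonneg | hnonpos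
  · calc (1 - 2 * x ^ 2) * sinh x ≤ (1 - 2 * x ^ 2) * (x * cosh x) :=
          mul_le_mul_of_nonneg_left (sinh_le_self_mul_cosh hx) hnonneg
      _ = x * (1 - 2 * x ^ 2) * cosh x := by ring
      _ ≤ x * (1 - w) * cosh x := by gcongr
  · have hfactor : 1 - 2 * x ^ 2 ≤ (1 + x) * (1 - w) := by
      calc 1 - 2 * x ^ 2 ≤ (1 + x) * (1 - x) := by linarith [sq_nonneg x]
        _ ≤ (1 + x) * (1 - w) := by gcongr
    have hmul : (1 + x) * ((1 - 2 * x ^ 2) * sinh x) ≤ (1 + x) * (x * (1 - w) * cosh x) := by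
      calc (1 + x) * ((1 - 2 * x ^ 2) * sinh x) = (1 - 2 * x ^ 2) * ((1 + x) * sinh x) := by ring
        _ ≤ (1 - 2 * x ^ 2) * (x * cosh x) :=
          mul_le_mul_of_nonpos_left (self_mul_cosh_le_one_add_mul_sinh x) hnonpos
        _ ≤ (1 + x) * (1 - w) * (x * cosh x) := by gcongr
        _ = (1 + x) * (x * (1 - w) * cosh x) := by ring
    exact le_of_mul_le_mul_left hmul (by positivity)

lemma second_level_eq_sinh_sub_cosh {μ x : ℝ} (hx : x * (1 - μ ^ 2) = μ) :
    (1 - μ - 5*μ^2 + 3*μ^3 + 5*μ^4 - 2*μ^5 - μ^6) * exp x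
      - (1 + μ - 5*μ^2 - 3*μ^3 + 5*μ^4 + 2*μ^5 - μ^6) * exp (-x)
      = 2 * (1 - μ ^ 2) ^ 3 * ((1 - 2 * x ^ 2) * sinh x - x * (1 - μ * x) * cosh x) := by
  have heven : 1 - 5*μ^2 + 5*μ^4 - μ^6 = (1 - μ ^ 2) ^ 3 * (1 - 2 * x ^ 2) := by
    linear_combination 2 * (1 - μ ^ 2) * (x * (1 - μ ^ 2) + μ) * hx
  have hodd : μ - 3*μ^3 + 2*μ^5 = (1 - μ ^ 2) ^ 3 * (x * (1 - μ * x)) := by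
    linear_combination (1 - μ ^ 2) * (μ * (x * (1 - μ ^ 2) + μ) - (1 - μ ^ 2)) * hx
  rw [← cosh_add_sinh, ← cosh_sub_sinh]
  linear_combination 2 * sinh x * heven - 2 * cosh x * hodd

theorem boundary_inequality_second_level_general (μ : ℝ) (hμ0 : 0 ≤ μ) (hμ1 : μ ≠ 1) :
    (1 - μ - 5*μ^2 + 3*μ^3 + 5*μ^4 - 2*μ^5 - μ^6) * Real.exp (μ/(1 - μ^2))
      - (1 + μ - 5*μ^2 - 3*μ^3 + 5*μ^4 + 2*μ^5 - μ^6) * Real.exp (-μ/(1 - μ^2)) ≤ 0 := by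
  have hden : 1 - μ ^ 2 ≠ 0 := by
    rw [sub_ne_zero, ne_comm, sq_ne_one_iff]
    exact ⟨hμ1, by linarith⟩
  rw [neg_div]
  generalize hxμ : μ / (1 - μ ^ 2) = x
  rw [second_level_eq_sinh_sub_cosh ((div_eq_iff hden).1 hxμ).symm]
  rcases hμ1.lt_or_gt with hlt | hgt
  · have hpos : 0 < 1 - μ ^ 2 := by nlinarith
    have hμx : μ ≤ x := hxμ ▸ le_div_self hμ0 hpos (sub_le_self 1 (sq_nonneg μ))
    have hx0 : 0 ≤ x := hμ0.trans hμx
    have hkey := one_sub_two_mul_sq_mul_sinh_le hx0 (w := μ * x) (by nlinarith) (by nlinarith)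
    exact mul_nonpos_of_nonneg_of_nonpos (by positivity) (sub_nonpos.2 hkey)
  · have hneg : 1 - μ ^ 2 < 0 := by nlinarith
    have hx0 : x ≤ 0 := hxμ ▸ div_nonpos_of_nonneg_of_nonpos hμ0 hneg.le
    have hμx : μ * x ≤ 0 := mul_nonpos_of_nonneg_of_nonpos hμ0 hx0
    have hkey := one_sub_two_mul_sq_mul_sinh_le (neg_nonneg.2 hx0) (w := μ * x)
      (by linarith) (by linarith [sq_nonneg (-x)])
    rw [sinh_neg, cosh_neg, neg_sq] at hkey
    have hcube : (1 - μ ^ 2) ^ 3 < 0 := Odd.pow_neg (by decide) hneg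
    exact mul_nonpos_of_nonpos_of_nonneg (by linarith) (by linarith)

theorem boundary_inequality_second_level (μ : ℝ) (hμ0 : 0 ≤ μ) (hμ1 : μ < 1) :
    (1 - μ - 5*μ^2 + 3*μ^3 + 5*μ^4 - 2*μ^5 - μ^6) * Real.exp (μ/(1 - μ^2))
      - (1 + μ - 5*μ^2 - 3*μ^3 + 5*μ^4 + 2*μ^5 - μ^6) * Real.exp (-μ/(1 - μ^2)) ≤ 0 :=
  boundary_inequality_second_level_general μ hμ0 hμ1.ne
end
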